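/- arXiv:2409.03922 — 2 statements merged into one kernel-verified Lean document; each statement's English description precedes it below -/
import Mathlib

section
/- Let k be a field of odd characteristic p, and let V be a k-vector space equipped with a direct sum decomposition V = ⊕_{q∈ℤ} V_q with only finitely many nonzero summands. Let γ ∈ End_k(V) be the operator acting on V_q as multiplication by −q/2 (which makes sense since 2 is invertible in k). Let D: V[[t]] → V[[t]] be the k-linear operator D = t^2·d/dt + t·γ, i.e., D(∑_n v_n t^n) = ∑_n (n·v_n + γ(v_n))·t^{n+1}. Then D^p = 0. -/
/-- The operator `D = t²·d/dt + t·γ` on `V[[t]]` (modelled as `ℕ → V`):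
`D(∑ vₙ tⁿ) = ∑ (n·vₙ + γ(vₙ))·t^{n+1}`. -/
def twistOp (k : Type*) [Field k] (V : Type*) [AddCommGroup V] [Module k V]
    (γ : Module.End k V) : Module.End k (ℕ → V) where
  toFun x n := match n with | 0 => 0 | (m + 1) => m • x m + γ (x m)
  map_add' x y := by
    funext n
    cases n with
    | zero => simp
    | succ m => simp [smul_add]; abel
  map_smul' c x := by
    funext n
    cases n with
    | zero => simp
    | succ m =>
      simp only [Pi.smul_apply, RingHom.id_apply, map_smul, smul_add]
      rw [smul_comm]

/-!
Write `D = T * e` with `T` multiplication by `t` and `e = t·d/dt + γ`. Since `e T = T (e + 1)`,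
moving the factors `T` to the left gives `D ^ n = T ^ n * (e (e + 1) ⋯ (e + n - 1))`. In
characteristic `p` the rising factorial `X (X + 1) ⋯ (X + p - 1)` is `X ^ p - X`, and Frobenius
is additive on the commuting operators `t·d/dt` and `γ` and fixes the first of them, hence
`D ^ p = T ^ p * (γ ^ p - γ)`. Finally `γ ^ p = γ`, because the eigenvalues `-q / 2` lie in the
prime field.
-/

open Polynomial

section Pochhammer

theorem ascPochhammer_zmod_eq_X_pow_sub_X (p : ℕ) [Fact p.Prime] :
    ascPochhammer (ZMod p) p = X ^ p - X := by
  have hp : 1 < p := (Fact.out : p.Prime).one_lt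
  have monic_right : (X ^ p - X : (ZMod p)[X]).Monic :=
    monic_X_pow_sub (by rw [degree_X]; exact_mod_cast hp)
  have degree_left : (ascPochhammer (ZMod p) p).degree = p := by
    rw [degree_eq_natDegree (monic_ascPochhammer _ p).ne_zero, ascPochhammer_natDegree]
  have degree_right : (X ^ p - X : (ZMod p)[X]).degree = p := by
    rw [degree_eq_natDegree monic_right.ne_zero, FiniteField.X_pow_card_sub_X_natDegree_eq _ hp]
  refine eq_of_degree_le_of_eval_finset_eq Finset.univ (by simp [degree_left, ZMod.card])
    (degree_left.trans degree_right.symm)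
    ((monic_ascPochhammer _ p).leadingCoeff.trans monic_right.leadingCoeff.symm) fun a _ => ?_
  have root_left : (ascPochhammer (ZMod p) p).eval a = 0 := by
    simpa using ascPochhammer_eval_neg_coe_nat_of_lt (R := ZMod p) (-a).val_lt
  simp [root_left]

theorem ascPochhammer_char_eq_X_pow_sub_X (R : Type*) [Ring R] (p : ℕ) [Fact p.Prime]
    [CharP R p] : ascPochhammer R p = X ^ p - X := by
  rw [← ascPochhammer_map (ZMod.castHom dvd_rfl R), ascPochhammer_zmod_eq_X_pow_sub_X]
  simp

variable {A : Type*} [Semiring A]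

theorem semiconjBy_pow_add_natCast {t e : A} (h : SemiconjBy t (e + 1) e) (n : ℕ) :
    SemiconjBy (t ^ n) (e + n) e := by
  induction n with
  | zero => simp
  | succ n ih =>
    rw [pow_succ, Nat.cast_succ, add_comm (n : A) 1, ← add_assoc]
    exact ih.mul_left (h.add_right (n.commute_cast t))

theorem mul_pow_eq_pow_mul_aeval_ascPochhammer (R : Type*) [CommSemiring R] [Algebra R A]
    {t e : A} (h : SemiconjBy t (e + 1) e) (n : ℕ) :
    (t * e) ^ n = t ^ n * aeval e (ascPochhammer R n) := by
  induction n with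
  | zero => simp
  | succ n ih =>
    calc (t * e) ^ (n + 1)
        = t * (e * t ^ n) * aeval e (ascPochhammer R n) := by
          rw [pow_succ', ih]
          simp only [mul_assoc]
      _ = t ^ (n + 1) * ((e + n) * aeval e (ascPochhammer R n)) := by
          rw [← (semiconjBy_pow_add_natCast h n).eq, pow_succ']
          simp only [mul_assoc]
      _ = t ^ (n + 1) * aeval e (ascPochhammer R (n + 1)) := by
          rw [ascPochhammer_succ_right, mul_comm (ascPochhammer R n)]
          simp

end Pochhammer

section CharP

theorem mul_pow_char_of_semiconjBy (R : Type*) {A : Type*} [CommRing R] [Ring A] [Algebra R A]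
    (p : ℕ) [Fact p.Prime] [CharP R p] {t e : A} (h : SemiconjBy t (e + 1) e) :
    (t * e) ^ p = t ^ p * (e ^ p - e) := by
  rw [mul_pow_eq_pow_mul_aeval_ascPochhammer R h, ascPochhammer_char_eq_X_pow_sub_X]
  simp

theorem add_pow_char_of_commute_of_algebra (R : Type*) {A : Type*} [CommSemiring R] [Semiring A]
    [Algebra R A] (p : ℕ) [hp : Fact p.Prime] [CharP R p] {x y : A} (h : Commute x y) :
    (x + y) ^ p = x ^ p + y ^ p := by
  obtain ⟨r, hr⟩ := h.exists_add_pow_prime_eq hp.out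
  have cast_eq_zero : (p : A) = 0 := by
    rw [← map_natCast (algebraMap R A), CharP.cast_eq_zero, map_zero]
  rw [hr, cast_eq_zero]
  simp

theorem neg_intCast_div_two_pow_char (k : Type*) [Field k] (p : ℕ) [Fact p.Prime] [CharP k p]
    (q : ℤ) : (-((q : k) / 2)) ^ p = -((q : k) / 2) := by
  rw [← frobenius_def, map_neg, map_div₀, map_intCast, map_ofNat]

end CharP

section Operators

variable (R M : Type*) [CommSemiring R] [AddCommMonoid M] [Module R M]

/-- Multiplication by `t` on `M[[t]]`, a series being encoded by its coefficient sequence. -/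
def coeffShift : Module.End R (ℕ → M) :=
  LinearMap.pi fun
    | 0 => 0
    | n + 1 => LinearMap.proj n

/-- The Euler operator `t·d/dt` on `M[[t]]`. It is encoded as the action of the scalar sequence
`n ↦ n`, so that its powers are computed in the commutative ring `ℕ → R`. -/
def eulerOp : Module.End R (ℕ → M) :=
  Algebra.lsmul R R (ℕ → M) (Nat.cast : ℕ → R)

/-- The ring homomorphism extending an endomorphism of `M` to `M[[t]]` coefficient by
coefficient. -/
def coeffwise : Module.End R M →+* Module.End R (ℕ → M) where
  toFun f := f.compLeft ℕ
  map_one' := rfl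
  map_mul' _ _ := rfl
  map_zero' := rfl
  map_add' _ _ := rfl

variable {R M}

@[simp]
theorem coeffShift_apply_zero (x : ℕ → M) : coeffShift R M x 0 = 0 := rfl

@[simp]
theorem coeffShift_apply_succ (x : ℕ → M) (n : ℕ) : coeffShift R M x (n + 1) = x n := rfl

@[simp]
theorem eulerOp_apply (x : ℕ → M) (n : ℕ) : eulerOp R M x n = n • x n :=
  Nat.cast_smul_eq_nsmul R n (x n)

@[simp]
theorem coeffwise_apply (f : Module.End R M) (x : ℕ → M) (n : ℕ) :
    coeffwise R M f x n = f (x n) := rfl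

theorem coeffShift_injective : Function.Injective (coeffShift R M) := fun _ _ h =>
  funext fun n => congrFun h (n + 1)

theorem coeffwise_injective : Function.Injective (coeffwise R M) := fun _ _ h =>
  LinearMap.ext fun v => congrFun (LinearMap.congr_fun h fun _ => v) 0

theorem commute_eulerOp_coeffwise (f : Module.End R M) :
    Commute (eulerOp R M) (coeffwise R M f) := by
  refine LinearMap.ext fun x => funext fun n => ?_
  simp

theorem semiconjBy_coeffShift_eulerOp_add_coeffwise (f : Module.End R M) :
    SemiconjBy (coeffShift R M) (eulerOp R M + coeffwise R M f + 1)
      (eulerOp R M + coeffwise R M f) := by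
  refine LinearMap.ext fun x => funext fun n => ?_
  cases n with
  | zero => simp
  | succ n => simp [add_smul, add_right_comm]

theorem eulerOp_pow_char (p : ℕ) [Fact p.Prime] [CharP R p] : eulerOp R M ^ p = eulerOp R M := by
  have cast_pow : (Nat.cast : ℕ → R) ^ p = Nat.cast := funext fun n => by
    rw [Pi.pow_apply, ← frobenius_def, map_natCast]
  rw [eulerOp, ← map_pow, cast_pow]

end Operators

theorem pow_eq_self_of_iSup_eq_top {R M ι : Type*} [CommRing R] [AddCommGroup M] [Module R M]
    {W : ι → Submodule R M} (hW : ⨆ i, W i = ⊤) {c : ι → R} {n : ℕ} (hc : ∀ i, c i ^ n = c i)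
    {f : Module.End R M} (hf : ∀ i, ∀ v ∈ W i, f v = c i • v) : f ^ n = f := by
  rw [← LinearMap.eqLocus_eq_top, eq_top_iff, ← hW]
  refine iSup_le fun i v hv => ?_
  rw [LinearMap.mem_eqLocus]
  rcases eq_or_ne v 0 with rfl | hv0
  · simp
  · have eigenvector : f.HasEigenvector (c i) v :=
      ⟨Module.End.mem_eigenspace_iff.mpr (hf i v hv), hv0⟩
    rw [eigenvector.pow_apply, hc, hf i v hv]

section TwistOp

variable {k V : Type*} [Field k] [AddCommGroup V] [Module k V]

theorem twistOp_eq_coeffShift_mul (γ : Module.End k V) :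
    twistOp k V γ = coeffShift k V * (eulerOp k V + coeffwise k V γ) := by
  refine LinearMap.ext fun x => funext fun n => ?_
  cases n with
  | zero => rfl
  | succ n => simp [twistOp]

theorem twistOp_pow_char (p : ℕ) [Fact p.Prime] [CharP k p] (γ : Module.End k V) :
    twistOp k V γ ^ p = coeffShift k V ^ p * coeffwise k V (γ ^ p - γ) := by
  rw [twistOp_eq_coeffShift_mul,
    mul_pow_char_of_semiconjBy k p (semiconjBy_coeffShift_eulerOp_add_coeffwise γ),
    add_pow_char_of_commute_of_algebra k p (commute_eulerOp_coeffwise γ), eulerOp_pow_char,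
    add_sub_add_left_eq_sub, map_sub, map_pow]

theorem statement7_general (p : ℕ) [Fact p.Prime] [CharP k p] (γ : Module.End k V) :
    twistOp k V γ ^ p = 0 ↔ γ ^ p = γ := by
  have shift_injective : Function.Injective (coeffShift k V ^ p) := by
    rw [Module.End.coe_pow]
    exact coeffShift_injective.iterate p
  rw [twistOp_pow_char, ← mul_zero (coeffShift k V ^ p), Module.End.mul_eq_comp,
    Module.End.mul_eq_comp, LinearMap.cancel_left shift_injective,
    map_eq_zero_iff _ coeffwise_injective, sub_eq_zero]

end TwistOp

/-- (C.5)–(C.6) in the paper. Let `k` be a field of odd characteristic `p`,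
and `V = ⊕_{q ∈ ℤ} V_q` a `k`-vector space graded by `ℤ` with only finitely many nonzero
summands. Let `γ` be the endomorphism acting on `V_q` by `−q/2`. Then the operator
`D = t²·d/dt + t·γ` on `V[[t]]` satisfies `D^p = 0`. -/
theorem statement7 {k : Type*} [Field k] (p : ℕ) [CharP k p] (hp0 : 0 < p) (hp2 : p ≠ 2)
    {V : Type*} [AddCommGroup V] [Module k V]
    (Vq : ℤ → Submodule k V)
    (hint : DirectSum.IsInternal Vq)
    (hfin : {q : ℤ | Vq q ≠ ⊥}.Finite)
    (γ : Module.End k V)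
    (hγ : ∀ (q : ℤ), ∀ v ∈ Vq q, γ v = (-((q : k) / 2)) • v) :
    (twistOp k V γ) ^ p = 0 := by
  have : Fact p.Prime := ⟨(CharP.char_is_prime_or_zero k p).resolve_right hp0.ne'⟩
  exact (statement7_general p γ).mpr (pow_eq_self_of_iSup_eq_top hint.submodule_iSup_eq_top
    (neg_intCast_div_two_pow_char k p) hγ)
end

section
/- Let R be an integral domain finitely generated as a ℤ-algebra whose fraction field K has characteristic 0. Let M be a free module of rank n over R((t)) with a connection ∇ (an additive map M → M with ∇(f·m) = (df/dt)·m + f·∇(m)) that contains a cyclic vector v ∈ M, i.e., v, ∇v, …, ∇^{n−1}v is an R((t))-basis of M. Suppose that M ⊗_{R((t))} K((t)) does not have a regular singularity at t = 0, i.e., there is no K((t))-basis of M ⊗_{R((t))} K((t)) in which the matrix of ∇_{t·d/dt} := t·∇ has all entries in K[[t]]. Then for every positive integer a divisible by n!, the connection obtained by base change along the ring map R((t)) → R((s)), t ↦ s^a (with the pulled-back connection satisfying ∇'_{s·d/ds}(m ⊗ 1) = a·(∇_{t·d/dt} m) ⊗ 1 and the Leibniz rule over R((s))) admits an R((s))-basis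 f in which ∇'_{s·d/ds} f = s^{−N}(A + sB)·f for some integer N ≥ 1, some non-nilpotent matrix A ∈ M_n(R), and some matrix B ∈ M_n(R[[s]]). -/
/-- Formal derivative `d/dt` on formal Laurent series. -/
noncomputable def lsDeriv {R : Type*} [CommRing R] (f : LaurentSeries R) : LaurentSeries R where
  coeff n := (n + 1) • f.coeff (n + 1)
  isPWO_support' := by
    refine Set.IsPWO.mono (f.isPWO_support.image_of_monotone
      (f := fun m : ℤ => m - 1) fun a b hab => sub_le_sub_right hab 1) ?_
    intro n hn
    have hne : f.coeff (n + 1) ≠ 0 := by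
      intro h0
      apply hn
      simp [Function.mem_support, h0]
    exact ⟨n + 1, hne, by ring⟩

/-- Substitution `t ↦ t^a` on formal Laurent series. -/
noncomputable def lsExpand {R : Type*} [CommRing R] (a : ℕ) (f : LaurentSeries R) :
    LaurentSeries R where
  coeff m := if _ : (a : ℤ) ∣ m then f.coeff (m / a) else 0
  isPWO_support' := by
    refine Set.IsPWO.mono (f.isPWO_support.image_of_monotone
      (f := fun m : ℤ => (a : ℤ) * m)
      (fun x y hxy => mul_le_mul_of_nonneg_left hxy (by positivity))) ?_
    intro m hm
    rw [Function.mem_support] at hm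
    by_cases h : (a : ℤ) ∣ m
    · exact ⟨m / a, fun h0 => hm (by simp [h, h0]), Int.mul_ediv_cancel' h⟩
    · exact absurd (by simp [h]) hm

/-- The connection `∇ = d/dt + G` on the free module `Fin n → R((t))`, where `G` is the
connection matrix. -/
noncomputable def connOp {R : Type*} [CommRing R] (n : ℕ)
    (G : Matrix (Fin n) (Fin n) (LaurentSeries R)) (x : Fin n → LaurentSeries R) :
    Fin n → LaurentSeries R :=
  fun i => lsDeriv (x i) + ∑ j, G i j * x j

/-- Entrywise formal derivative of a matrix of Laurent series. -/
noncomputable def matDeriv {R : Type*} [CommRing R] {n : ℕ}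
    (P : Matrix (Fin n) (Fin n) (LaurentSeries R)) : Matrix (Fin n) (Fin n) (LaurentSeries R) :=
  Matrix.of fun i j => lsDeriv (P i j)

/-!
The matrix of `∇_{t d/dt}` in the basis `v, ∇_{t d/dt} v, …` of a cyclic vector is a companion
matrix. If its last column `b` had no pole, this basis would exhibit a regular singularity, so
some `b i` has a pole, and the largest slope `-ord (b i) / (n - i)` of the Newton polygon is
positive. Since `n - i` divides `n!`, the slope becomes an integer `N` after `t = s ^ a`.
Rescaling the `j`-th basis vector by `s ^ (j N)` then makes the pole of the connection matrix have
order exactly `N`, with leading coefficient `a` times a companion matrix whose last column is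
nonzero. Such a matrix is not nilpotent: by Cayley–Hamilton its `n`-th power would vanish, but
this power sends the first basis vector to the last column.
-/

section Companion

open Matrix

variable {S T : Type*} [CommRing S] [CommRing T] {n : ℕ}

/-- The companion matrix over `S` with last column `b`: it sends `e j` to `e (j + 1)` for
`j + 1 < n`, and the last basis vector to `b`. -/
def companionMatrix (b : Fin n → S) : Matrix (Fin n) (Fin n) S :=
  Matrix.of fun i j => if (j : ℕ) + 1 = n then b i else if (i : ℕ) = j + 1 then 1 else 0

lemma companionMatrix_apply (b : Fin n → S) (i j : Fin n) :
    companionMatrix b i j =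
      if (j : ℕ) + 1 = n then b i else if (i : ℕ) = j + 1 then 1 else 0 :=
  rfl

lemma companionMatrix_map (σ : S →+* T) (b : Fin n → S) :
    (companionMatrix b).map σ = companionMatrix (σ ∘ b) := by
  ext i j
  simp only [map_apply, companionMatrix_apply, Function.comp_apply]
  split_ifs <;> simp

lemma companionMatrix_col_of_lt (b : Fin n → S) {j : Fin n} (hj : (j : ℕ) + 1 < n) :
    (companionMatrix b).col j = Pi.single ⟨j + 1, hj⟩ 1 := by
  ext i
  simp [companionMatrix_apply, hj.ne, Pi.single_apply, Fin.ext_iff]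

lemma companionMatrix_col_last (b : Fin n → S) {j : Fin n} (hj : (j : ℕ) + 1 = n) :
    (companionMatrix b).col j = b := by
  ext i
  simp [companionMatrix_apply, hj]

lemma companionMatrix_pow_mulVec_single (b : Fin n → S) {k : ℕ} (hk : k < n) :
    companionMatrix b ^ k *ᵥ Pi.single ⟨0, by omega⟩ 1 = Pi.single ⟨k, hk⟩ 1 := by
  induction k with
  | zero => rw [pow_zero, one_mulVec]
  | succ k ih =>
    rw [pow_succ', ← mulVec_mulVec, ih (by omega), mulVec_single_one,
      companionMatrix_col_of_lt b hk]

lemma companionMatrix_pow_self_mulVec_single (b : Fin n → S) (hn : 0 < n) :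
    companionMatrix b ^ n *ᵥ Pi.single ⟨0, hn⟩ 1 = b := by
  obtain ⟨m, rfl⟩ := Nat.exists_eq_succ_of_ne_zero hn.ne'
  rw [pow_succ', ← mulVec_mulVec, companionMatrix_pow_mulVec_single b m.lt_succ_self,
    mulVec_single_one, companionMatrix_col_last b rfl]

lemma matrix_pow_card_eq_zero_of_isNilpotent [IsReduced S] {ι : Type*} [Fintype ι] [DecidableEq ι]
    {A : Matrix ι ι S} (hA : IsNilpotent A) : A ^ Fintype.card ι = 0 := by
  have hcharpoly : A.charpoly = .X ^ Fintype.card ι :=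
    sub_eq_zero.mp <| Polynomial.ext fun i => (Polynomial.isNilpotent_iff.mp
      (isNilpotent_charpoly_sub_pow_of_isNilpotent hA) i).eq_zero
  simpa [hcharpoly] using A.aeval_self_charpoly

lemma eq_zero_of_isNilpotent_companionMatrix [IsReduced S] {b : Fin n → S}
    (h : IsNilpotent (companionMatrix b)) : b = 0 := by
  rcases n.eq_zero_or_pos with rfl | hn
  · exact Subsingleton.elim _ _
  · have hpow : companionMatrix b ^ n = 0 := by
      simpa using matrix_pow_card_eq_zero_of_isNilpotent h
    rw [← companionMatrix_pow_self_mulVec_single b hn, hpow, zero_mulVec]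

lemma isNilpotent_of_isNilpotent_nsmul {A : Type*} [Semiring A] {a : ℕ} (ha : IsSMulRegular A a)
    {x : A} (h : IsNilpotent (a • x)) : IsNilpotent x := by
  obtain ⟨k, hk⟩ := h
  rw [smul_pow] at hk
  exact ⟨k, (ha.pow k).right_eq_zero_of_smul hk⟩

end Companion

section Connection

open Matrix

/-- Additive derivations of a commutative ring. The abbreviation fixes the `ℤ`-algebra structure of
`S` to be the canonical one; Laurent series rings carry further, not definitionally equal ones. -/
abbrev AbsoluteDerivation (S : Type*) [CommRing S] := Derivation ℤ S S

/-- An additive map satisfying the Leibniz rule, as a derivation. -/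
def AbsoluteDerivation.ofAddMonoidHom {S : Type*} [CommRing S] (f : S →+ S)
    (hf : ∀ x y, f (x * y) = x * f y + y * f x) : AbsoluteDerivation S :=
  Derivation.mk' f.toIntLinearMap hf

variable {S : Type*} [CommRing S] (D : AbsoluteDerivation S) {ι : Type*} [Fintype ι]

lemma map_derivation_mul (P Q : Matrix ι ι S) : (P * Q).map D = P.map D * Q + P * Q.map D := by
  ext i j
  simp only [map_apply, mul_apply, Matrix.add_apply, map_sum, Derivation.leibniz,
    smul_eq_mul, ← Finset.sum_add_distrib]
  exact Finset.sum_congr rfl fun l _ => by ring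

/-- The columns of `P` are carried by the connection `D + A` on `S ^ ι` to the columns of `P * B`.
When `P` is invertible, this says that `B` is the matrix of the connection in the basis formed by
the columns of `P`. -/
def IsConnectionMatrix (A P B : Matrix ι ι S) : Prop :=
  P.map D + A * P = P * B

variable {D}

lemma IsConnectionMatrix.trans {A P B Q C : Matrix ι ι S} (hP : IsConnectionMatrix D A P B)
    (hQ : IsConnectionMatrix D B Q C) : IsConnectionMatrix D A (P * Q) C := by
  unfold IsConnectionMatrix at *
  rw [map_derivation_mul, mul_assoc, ← hQ, mul_add, ← mul_assoc P B, ← hP]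
  noncomm_ring

lemma IsConnectionMatrix.map {S' : Type*} [CommRing S'] {D' : AbsoluteDerivation S'}
    {σ : S →+* S'} {c : S'} (hσ : ∀ f, D' (σ f) = c * σ (D f))
    {A P B : Matrix ι ι S} (h : IsConnectionMatrix D A P B) :
    IsConnectionMatrix D' (c • A.map σ) (P.map σ) (c • B.map σ) := by
  have hderiv : (P.map σ).map D' = c • (P.map D).map σ := by
    ext i j
    exact hσ (P i j)
  unfold IsConnectionMatrix at *
  rw [hderiv, Matrix.smul_mul, Matrix.mul_smul, ← smul_add, ← Matrix.map_mul, ← Matrix.map_mul,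
    ← h, Matrix.map_add _ (map_add σ)]

variable (D) in
/-- The connection `D + A` as an additive endomorphism of `S ^ ι`. -/
def connectionMap (A : Matrix ι ι S) : (ι → S) →+ (ι → S) :=
  AddMonoidHom.mk' (fun x => D ∘ x + A *ᵥ x) fun x y => by
    ext i
    simp only [mulVec_add, Pi.add_apply, Function.comp_apply, map_add]
    ring

lemma connectionMap_apply (A : Matrix ι ι S) (x : ι → S) :
    connectionMap D A x = D ∘ x + A *ᵥ x :=
  rfl

lemma connectionMap_smul (A : Matrix ι ι S) (f : S) (x : ι → S) :
    connectionMap D A (f • x) = D f • x + f • connectionMap D A x := by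
  ext i
  simp only [connectionMap_apply, mulVec_smul, Pi.add_apply, Pi.smul_apply,
    Function.comp_apply, smul_eq_mul, Derivation.leibniz]
  ring

end Connection

section Cyclic

open Matrix

variable {S M : Type*} [CommRing S] [AddCommGroup M] [Module S M] {n : ℕ}

lemma map_mem_span_union_image {δ : S → S} {T : M →+ M}
    (hT : ∀ (f : S) (x : M), T (f • x) = δ f • x + f • T x) {s : Set M} {x : M}
    (hx : x ∈ Submodule.span S s) : T x ∈ Submodule.span S (s ∪ T '' s) := by
  induction hx using Submodule.span_induction with
  | mem x hx => exact Submodule.subset_span (.inr ⟨x, hx, rfl⟩)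
  | zero => simp
  | add x y _ _ hx hy => simpa using add_mem hx hy
  | smul f x hx ih =>
    rw [hT]
    exact add_mem (Submodule.smul_mem _ _ (Submodule.span_mono Set.subset_union_left hx))
      (Submodule.smul_mem _ _ ih)

lemma iterate_smul_mem_span_iterate {δ : S → S} {T : M →+ M}
    (hT : ∀ (f : S) (x : M), T (f • x) = δ f • x + f • T x) (c : S) (v : M) (m : ℕ) :
    (fun x => c • T x)^[m] v ∈ Submodule.span S ((fun i => T^[i] v) '' Set.Iic m) := by
  induction m with
  | zero => exact Submodule.subset_span ⟨0, by simp, rfl⟩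
  | succ m ih =>
    rw [Function.iterate_succ_apply']
    refine Submodule.smul_mem _ _ (Submodule.span_mono ?_ (map_mem_span_union_image hT ih))
    rintro _ (⟨i, hi, rfl⟩ | ⟨_, ⟨i, hi, rfl⟩, rfl⟩)
    · exact ⟨i, (Set.mem_Iic.mp hi).trans m.le_succ, rfl⟩
    · exact ⟨i + 1, Nat.succ_le_succ hi, Function.iterate_succ_apply' T i v⟩

/-- The matrix with columns `v, T v, …, T ^ (n - 1) v`; it is invertible exactly when `v` is a
cyclic vector for `T`. -/
def krylovMatrix (T : (Fin n → S) → Fin n → S) (v : Fin n → S) : Matrix (Fin n) (Fin n) S :=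
  Matrix.of fun i j => T^[j] v i

lemma isUnit_matrix_iff_span_col_eq_top {ι : Type*} [Fintype ι] [DecidableEq ι]
    {A : Matrix ι ι S} : IsUnit A ↔ Submodule.span S (Set.range A.col) = ⊤ := by
  rw [← mulVec_surjective_iff_isUnit, ← Matrix.range_mulVecLin, LinearMap.range_eq_top]
  rfl

lemma isUnit_krylovMatrix_of_smul {δ : S → S} {T : (Fin n → S) →+ (Fin n → S)}
    (hT : ∀ (f : S) (x : Fin n → S), T (f • x) = δ f • x + f • T x) {c : S} {v : Fin n → S}
    (h : IsUnit (krylovMatrix (fun x => c • T x) v)) : IsUnit (krylovMatrix T v) := by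
  rw [isUnit_matrix_iff_span_col_eq_top] at h ⊢
  refine top_le_iff.mp (h ▸ Submodule.span_le.mpr ?_)
  rintro _ ⟨j, rfl⟩
  refine Submodule.span_mono ?_ (iterate_smul_mem_span_iterate hT c v j)
  rintro _ ⟨i, hi, rfl⟩
  exact ⟨⟨i, (Set.mem_Iic.mp hi).trans_lt j.isLt⟩, rfl⟩

lemma isConnectionMatrix_krylovMatrix {D : AbsoluteDerivation S}
    {A : Matrix (Fin n) (Fin n) S} {v b : Fin n → S}
    (hb : krylovMatrix (connectionMap D A) v *ᵥ b = (connectionMap D A)^[n] v) :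
    IsConnectionMatrix D A (krylovMatrix (connectionMap D A) v) (companionMatrix b) := by
  set E := krylovMatrix (connectionMap D A) v
  have hleft (j : Fin n) : (E.map D + A * E).col j = (connectionMap D A)^[j + 1] v := by
    rw [Function.iterate_succ_apply']
    rfl
  have hright (j : Fin n) : (E * companionMatrix b).col j = (connectionMap D A)^[j + 1] v := by
    change E *ᵥ (companionMatrix b).col j = _
    rcases (Nat.succ_le_of_lt j.isLt).lt_or_eq with hj | hj
    · rw [companionMatrix_col_of_lt b hj, mulVec_single_one]
      rfl
    · rw [companionMatrix_col_last b hj, hb]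
      exact congrArg (fun m => (connectionMap D A)^[m] v) hj.symm
  ext i j
  exact congrFun ((hleft j).trans (hright j).symm) i

end Cyclic

section LaurentSeries

open HahnSeries LaurentSeries

variable {R : Type*} [CommRing R]

lemma single_one_mul_lsDeriv_coeff (f : R⸨X⸩) (m : ℤ) :
    (single (1 : ℤ) (1 : R) * lsDeriv f).coeff m = m • f.coeff m := by
  simp [coeff_single_mul, lsDeriv]

lemma single_one_mul_lsDeriv_mul (f g : R⸨X⸩) :
    single (1 : ℤ) (1 : R) * lsDeriv (f * g) =
      f * (single 1 1 * lsDeriv g) + g * (single 1 1 * lsDeriv f) := by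
  have hsupport (h : R⸨X⸩) : (single (1 : ℤ) (1 : R) * lsDeriv h).support ⊆ h.support := by
    intro m hm hzero
    exact hm (by rw [single_one_mul_lsDeriv_coeff, hzero, smul_zero])
  ext m
  rw [mul_comm g, single_one_mul_lsDeriv_coeff, coeff_add,
    coeff_mul_right' g.isPWO_support (hsupport g), coeff_mul_left' f.isPWO_support (hsupport f),
    coeff_mul, ← Finset.sum_add_distrib, Finset.smul_sum]
  refine Finset.sum_congr rfl fun p hp => ?_
  rw [single_one_mul_lsDeriv_coeff, single_one_mul_lsDeriv_coeff,
    ← (Finset.mem_antidiagonal.mp hp).2.2]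
  simp only [zsmul_eq_mul, Int.cast_add]
  ring

variable (R) in
/-- The Euler derivation `t d/dt` of `R((t))`. -/
noncomputable def eulerDerivation : AbsoluteDerivation R⸨X⸩ :=
  .ofAddMonoidHom
    (AddMonoidHom.mk' (fun f => single 1 1 * lsDeriv f) fun f g => by
      ext m
      simp [single_one_mul_lsDeriv_coeff])
    single_one_mul_lsDeriv_mul

lemma eulerDerivation_coeff (f : R⸨X⸩) (m : ℤ) :
    (eulerDerivation R f).coeff m = m • f.coeff m :=
  single_one_mul_lsDeriv_coeff f m

lemma eulerDerivation_single (m : ℤ) (r : R) :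
    eulerDerivation R (single m r) = m * single m r := by
  ext l
  rw [eulerDerivation_coeff, ← zsmul_eq_mul, coeff_smul]
  rcases eq_or_ne l m with rfl | h
  · rfl
  · simp [coeff_single_of_ne h]

lemma isUnit_single_one (m : ℤ) : IsUnit (single m (1 : R)) :=
  IsUnit.of_mul_eq_one (single (-m) 1) (by simp)

lemma lsExpand_coeff_mul {a : ℕ} (ha : 0 < a) (f : R⸨X⸩) (m : ℤ) :
    (lsExpand a f).coeff (a * m) = f.coeff m := by
  simp [lsExpand, ha.ne']

lemma lsExpand_coeff_of_not_dvd {a : ℕ} (f : R⸨X⸩) {m : ℤ} (hm : ¬ (a : ℤ) ∣ m) :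
    (lsExpand a f).coeff m = 0 := by
  simp [lsExpand, hm]

lemma lsExpand_coeff_eq_zero_of_lt {a : ℕ} (ha : 0 < a) {f : R⸨X⸩} {m : ℤ}
    (hm : m < a * f.order) : (lsExpand a f).coeff m = 0 := by
  by_cases hdvd : (a : ℤ) ∣ m
  · obtain ⟨l, rfl⟩ := hdvd
    rw [lsExpand_coeff_mul ha]
    exact coeff_eq_zero_of_lt_order (lt_of_mul_lt_mul_left hm (by positivity))
  · exact lsExpand_coeff_of_not_dvd f hdvd

lemma eulerDerivation_lsExpand {a : ℕ} (ha : 0 < a) (f : R⸨X⸩) :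
    eulerDerivation R (lsExpand a f) = a * lsExpand a (eulerDerivation R f) := by
  ext m
  rw [← nsmul_eq_mul, coeff_nsmul, Pi.smul_apply, eulerDerivation_coeff]
  by_cases hdvd : (a : ℤ) ∣ m
  · obtain ⟨l, rfl⟩ := hdvd
    simp [lsExpand_coeff_mul ha, eulerDerivation_coeff, mul_assoc]
  · simp [lsExpand_coeff_of_not_dvd _ hdvd]

variable (R) in
/-- The substitution `t ↦ t ^ a` of `lsExpand` as a ring endomorphism of `R((t))`, obtained from
the order embedding `m ↦ a * m` of exponents. -/
noncomputable def lsExpandHom {a : ℕ} (ha : 0 < a) : R⸨X⸩ →+* R⸨X⸩ :=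
  embDomainRingHom (AddMonoidHom.mulLeft (a : ℤ)) (mul_right_injective₀ (by positivity))
    fun _ _ => mul_le_mul_iff_right₀ (by positivity)

lemma lsExpandHom_apply {a : ℕ} (ha : 0 < a) (f : R⸨X⸩) : lsExpandHom R ha f = lsExpand a f := by
  ext m
  by_cases hdvd : (a : ℤ) ∣ m
  · obtain ⟨l, rfl⟩ := hdvd
    rw [lsExpand_coeff_mul ha]
    exact embDomain_coeff
  · rw [lsExpand_coeff_of_not_dvd f hdvd]
    refine embDomain_of_notMem_range ?_
    rintro ⟨l, hl⟩
    exact hdvd ⟨l, hl.symm⟩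

/-- The ring homomorphism `R((t)) → K((t))` applying `φ : R → K` to the coefficients. -/
noncomputable def lsMapHom {K : Type*} [CommRing K] (φ : R →+* K) : R⸨X⸩ →+* K⸨X⸩ where
  toFun f := f.map φ
  map_one' := HahnSeries.map_one φ.toMonoidWithZeroHom
  map_mul' _ _ := HahnSeries.map_mul (φ : R →ₙ+* K)
  map_zero' := HahnSeries.map_zero (φ : ZeroHom R K)
  map_add' _ _ := HahnSeries.map_add (φ : R →+ K)

lemma lsMapHom_coeff {K : Type*} [CommRing K] (φ : R →+* K) (f : R⸨X⸩) (m : ℤ) :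
    (lsMapHom φ f).coeff m = φ (f.coeff m) :=
  rfl

lemma lsMapHom_single {K : Type*} [CommRing K] (φ : R →+* K) (m : ℤ) (r : R) :
    lsMapHom φ (single m r) = single m (φ r) :=
  HahnSeries.map_single (φ : ZeroHom R K)

lemma lsMapHom_ofPowerSeries {K : Type*} [CommRing K] (φ : R →+* K) (F : PowerSeries R) :
    lsMapHom φ (ofPowerSeries ℤ R F) = ofPowerSeries ℤ K (F.map φ) := by
  ext m
  rw [lsMapHom_coeff]
  by_cases hm : m ∈ Set.range ((↑) : ℕ → ℤ)
  · obtain ⟨l, rfl⟩ := hm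
    simp [ofPowerSeries_apply_coeff]
  · simp only [ofPowerSeries_apply]
    rw [embDomain_of_notMem_range hm, embDomain_of_notMem_range hm, map_zero]

lemma eulerDerivation_lsMapHom {K : Type*} [CommRing K] (φ : R →+* K) (f : R⸨X⸩) :
    eulerDerivation K (lsMapHom φ f) = lsMapHom φ (eulerDerivation R f) := by
  ext m
  simp [lsMapHom_coeff, eulerDerivation_coeff]

variable {ι : Type*}

lemma exists_ofPowerSeries_eq {f : R⸨X⸩} (hf : 0 ≤ f.order) :
    ∃ F : PowerSeries R, ofPowerSeries ℤ R F = f := by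
  obtain ⟨d, hd⟩ := Int.eq_ofNat_of_zero_le hf
  exact ⟨_, X_order_mul_powerSeriesPart hd.symm⟩

lemma exists_map_ofPowerSeries_eq {M : Matrix ι ι R⸨X⸩} (hM : ∀ i j, ∀ m < 0, (M i j).coeff m = 0) :
    ∃ B : Matrix ι ι (PowerSeries R), B.map (ofPowerSeries ℤ R) = M := by
  choose B hB using fun i j => exists_ofPowerSeries_eq <|
    zero_le_orderTop_iff.mp <| le_orderTop_iff_forall.mpr fun m hm => hM i j m (mod_cast hm)
  exact ⟨Matrix.of B, Matrix.ext hB⟩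

lemma exists_eq_single_smul_leading_add {M : Matrix ι ι R⸨X⸩} {d : ℤ}
    (hM : ∀ i j, ∀ m < d, (M i j).coeff m = 0) :
    ∃ B : Matrix ι ι (PowerSeries R),
      M = single d (1 : R) • ((Matrix.of fun i j => (M i j).coeff d).map (fun x => C x) +
        single (1 : ℤ) (1 : R) • B.map (ofPowerSeries ℤ R)) := by
  let A := Matrix.of fun i j => (M i j).coeff d
  have htail : ∀ i j, ∀ m < 0,
      ((single (-1 - d) (1 : R) • (M - A.map (single d)) : Matrix ι ι R⸨X⸩) i j).coeff m = 0 := by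
    intro i j m hm
    simp only [Matrix.smul_apply, Matrix.sub_apply, Matrix.map_apply, smul_eq_mul, coeff_single_mul,
      one_mul, coeff_sub, coeff_single]
    split_ifs with hd
    · simp [hd, A]
    · rw [hM i j _ (by omega), sub_zero]
  obtain ⟨B, hB⟩ := exists_map_ofPowerSeries_eq htail
  refine ⟨B, ?_⟩
  ext1 i j
  have hexp : d + (1 + (-1 - d)) = 0 := by ring
  simp [hB, mul_add, ← mul_assoc, A, C_apply, hexp]

end LaurentSeries

section RegularSingularity

open HahnSeries LaurentSeries

variable {R : Type*} [CommRing R] {n : ℕ}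

/-- The connection `d/dt + G` has a regular singularity at `t = 0`: in the basis formed by the
columns of some invertible `P`, the matrix of `∇_{t d/dt}` has entries in `R[[t]]`. -/
def HasRegularSingularity (G : Matrix (Fin n) (Fin n) R⸨X⸩) : Prop :=
  ∃ P, IsUnit P ∧ ∃ B : Matrix (Fin n) (Fin n) (PowerSeries R),
    single (1 : ℤ) (1 : R) • (matDeriv P + G * P) = P * B.map (ofPowerSeries ℤ R)

lemma single_one_smul_matDeriv (P : Matrix (Fin n) (Fin n) R⸨X⸩) :
    single (1 : ℤ) (1 : R) • matDeriv P = P.map (eulerDerivation R) :=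
  rfl

lemma hasRegularSingularity_iff {G : Matrix (Fin n) (Fin n) R⸨X⸩} :
    HasRegularSingularity G ↔ ∃ P, IsUnit P ∧ ∃ B : Matrix (Fin n) (Fin n) (PowerSeries R),
      IsConnectionMatrix (eulerDerivation R) (single (1 : ℤ) (1 : R) • G) P
        (B.map (ofPowerSeries ℤ R)) := by
  simp only [HasRegularSingularity, IsConnectionMatrix, smul_add, single_one_smul_matDeriv,
    Matrix.smul_mul]

lemma HasRegularSingularity.map {G : Matrix (Fin n) (Fin n) R⸨X⸩} (hG : HasRegularSingularity G)
    {K : Type*} [CommRing K] (φ : R →+* K) : HasRegularSingularity (G.map (lsMapHom φ)) := by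
  obtain ⟨P, hP, B, hB⟩ := hasRegularSingularity_iff.mp hG
  refine hasRegularSingularity_iff.mpr
    ⟨P.map (lsMapHom φ), hP.map (lsMapHom φ).mapMatrix, B.map (PowerSeries.map φ), ?_⟩
  have hmap := hB.map (σ := lsMapHom φ) (c := 1) (D' := eulerDerivation K)
    fun f => by rw [one_mul, eulerDerivation_lsMapHom]
  convert hmap using 1
  · ext1 i j
    simp [lsMapHom_single]
  · ext1 i j
    simp [lsMapHom_ofPowerSeries]

lemma connOp_eq_single_smul_connectionMap (G : Matrix (Fin n) (Fin n) R⸨X⸩) (x : Fin n → R⸨X⸩) :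
    connOp n G x =
      single (-1 : ℤ) (1 : R) •
        connectionMap (eulerDerivation R) (single (1 : ℤ) (1 : R) • G) x := by
  have hinv : single (-1 : ℤ) (1 : R) * single 1 1 = 1 := by simp
  ext1 i
  change lsDeriv (x i) + ∑ j, G i j * x j = single (-1 : ℤ) (1 : R) *
    (single (1 : ℤ) (1 : R) * lsDeriv (x i) + ∑ j, single (1 : ℤ) (1 : R) * G i j * x j)
  simp only [mul_add, Finset.mul_sum, ← mul_assoc, hinv, one_mul]

lemma exists_isConnectionMatrix_companionMatrix {G : Matrix (Fin n) (Fin n) R⸨X⸩}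
    {v : Fin n → R⸨X⸩} (hv : IsUnit (krylovMatrix (connOp n G) v)) :
    ∃ E, IsUnit E ∧ ∃ b, IsConnectionMatrix (eulerDerivation R) (single (1 : ℤ) (1 : R) • G) E
      (companionMatrix b) := by
  let T := connectionMap (eulerDerivation R) (single (1 : ℤ) (1 : R) • G)
  have hconnOp : connOp n G = fun x => single (-1 : ℤ) (1 : R) • T x :=
    funext (connOp_eq_single_smul_connectionMap G)
  have hE : IsUnit (krylovMatrix T v) :=
    isUnit_krylovMatrix_of_smul (connectionMap_smul _) (hconnOp ▸ hv)
  obtain ⟨b, hb⟩ := Matrix.mulVec_surjective_iff_isUnit.mpr hE (T^[n] v)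
  exact ⟨_, hE, b, isConnectionMatrix_krylovMatrix hb⟩

lemma hasRegularSingularity_of_companionMatrix {G E : Matrix (Fin n) (Fin n) R⸨X⸩} (hE : IsUnit E)
    {b : Fin n → R⸨X⸩} (hb : ∀ i, 0 ≤ (b i).order)
    (h : IsConnectionMatrix (eulerDerivation R) (single (1 : ℤ) (1 : R) • G) E
      (companionMatrix b)) : HasRegularSingularity G := by
  choose β hβ using fun i => exists_ofPowerSeries_eq (hb i)
  refine hasRegularSingularity_iff.mpr ⟨E, hE, companionMatrix β, ?_⟩
  rwa [companionMatrix_map, show ofPowerSeries ℤ R ∘ β = b from funext hβ]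

end RegularSingularity

section Ramification

open HahnSeries LaurentSeries

variable {R : Type*} [CommRing R] {n : ℕ} {ι : Type*} [DecidableEq ι]

lemma exists_newton_slope {a : ℕ} (ha : 0 < a) (hdvd : n.factorial ∣ a) {d : Fin n → ℤ}
    (hd : ∃ i, d i < 0) :
    ∃ N : ℕ, 1 ≤ N ∧ (∀ i : Fin n, -((n - i : ℤ) * N) ≤ a * d i) ∧
      ∃ i : Fin n, d i < 0 ∧ a * d i = -((n - i : ℤ) * N) := by
  -- `N` is `a` times the largest slope `-d i / (n - i)`; with `q i = a / (n - i)` it is an integer.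
  have hdvd_sub (i : Fin n) : n - (i : ℕ) ∣ a :=
    (Nat.dvd_factorial (by omega) (Nat.sub_le _ _)).trans hdvd
  choose q hq using hdvd_sub
  have hq' (i : Fin n) : (a : ℤ) = (n - i) * q i := by
    rw [← Nat.cast_sub i.isLt.le, ← Nat.cast_mul, ← hq]
  obtain ⟨i₁, hi₁⟩ := hd
  have : Nonempty (Fin n) := ⟨i₁⟩
  obtain ⟨i₀, hi₀⟩ := Finite.exists_max fun i : Fin n => -d i * q i
  have hpos : 0 < -d i₀ * q i₀ := by
    have hq₁ : q i₁ ≠ 0 := by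
      intro h
      exact ha.ne' ((hq i₁).trans (by rw [h, mul_zero]))
    exact (mul_pos (neg_pos.mpr hi₁) (by positivity)).trans_le (hi₀ i₁)
  obtain ⟨N, hN⟩ := Int.eq_ofNat_of_zero_le hpos.le
  have hneg : d i₀ < 0 := neg_pos.mp (pos_of_mul_pos_left hpos (Nat.cast_nonneg _))
  have hattained : a * d i₀ = -((n - i₀ : ℤ) * N) := by
    rw [← hN, hq' i₀]
    ring
  refine ⟨N, by omega, fun i => ?_, i₀, hneg, hattained⟩
  calc -((n - i : ℤ) * N) ≤ -((n - i : ℤ) * (-d i * q i)) :=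
        neg_le_neg (mul_le_mul_of_nonneg_left (hN ▸ hi₀ i) (by omega))
    _ = a * d i := by rw [hq' i]; ring

/-- The matrix of the connection `t d/dt + B` after the change of basis `diagonal (t ^ w j)`. -/
noncomputable def shear (w : ι → ℤ) (B : Matrix ι ι R⸨X⸩) : Matrix ι ι R⸨X⸩ :=
  (Matrix.of fun i j => single (w j - w i) (1 : R) * B i j) + Matrix.diagonal fun j => (w j : R⸨X⸩)

lemma isConnectionMatrix_shear [Fintype ι] (w : ι → ℤ) (B : Matrix ι ι R⸨X⸩) :
    IsConnectionMatrix (eulerDerivation R) B (Matrix.diagonal fun j => single (w j) 1)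
      (shear w B) := by
  ext1 i j
  have hentry : single (w i) (1 : R) * (single (w j - w i) 1 * B i j) = B i j * single (w j) 1 := by
    rw [← mul_assoc, single_mul_single, mul_one, add_sub_cancel, mul_comm]
  rw [Matrix.add_apply, Matrix.map_apply, Matrix.mul_diagonal, Matrix.diagonal_mul, shear,
    Matrix.add_apply, Matrix.of_apply, mul_add, hentry, add_comm]
  rcases eq_or_ne i j with rfl | hij
  · rw [Matrix.diagonal_apply_eq, Matrix.diagonal_apply_eq, eulerDerivation_single,
      mul_comm (w i : R⸨X⸩)]
  · rw [Matrix.diagonal_apply_ne _ hij, Matrix.diagonal_apply_ne _ hij, map_zero, mul_zero]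

lemma isUnit_diagonal_single [Fintype ι] (w : ι → ℤ) :
    IsUnit (Matrix.diagonal fun j => single (w j) (1 : R)) :=
  Matrix.isUnit_diagonal.mpr (Pi.isUnit_iff.mpr fun j => isUnit_single_one (w j))

lemma shear_coeff_of_neg (w : ι → ℤ) (B : Matrix ι ι R⸨X⸩) (i j : ι) {m : ℤ}
    (hm : m < 0) : (shear w B i j).coeff m = (B i j).coeff (m - (w j - w i)) := by
  have hdiag : (Matrix.diagonal (fun j => (w j : R⸨X⸩)) i j).coeff m = 0 := by
    rcases eq_or_ne i j with rfl | hij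
    · rw [Matrix.diagonal_apply_eq, ← map_intCast (C : R →+* R⸨X⸩), C_apply,
        coeff_single_of_ne hm.ne]
    · simp [hij]
  simp [shear, coeff_single_mul, hdiag]

lemma shear_nsmul_companionMatrix_coeff (a : ℕ) (N : ℤ) (β : Fin n → R⸨X⸩) (i j : Fin n) {m : ℤ}
    (hm : m < 0) :
    (shear (fun j : Fin n => j * N) (a • companionMatrix β) i j).coeff m =
      a • if (j : ℕ) + 1 = n then (β i).coeff (m + N - (n - i) * N)
        else if (i : ℕ) = j + 1 then (1 : R⸨X⸩).coeff (m + N) else 0 := by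
  rw [shear_coeff_of_neg _ _ _ _ hm, Matrix.smul_apply, coeff_nsmul, Pi.smul_apply,
    companionMatrix_apply]
  split_ifs with hj hi
  · congr 2
    have hn : (n : ℤ) = j + 1 := by exact_mod_cast hj.symm
    rw [hn]
    ring
  · congr 2
    rw [hi]
    push_cast
    ring
  · rfl

lemma shear_nsmul_companionMatrix_coeff_of_lt (a : ℕ) {N : ℤ} (hN : 0 ≤ N) {β : Fin n → R⸨X⸩}
    (hβ : ∀ i : Fin n, ∀ m < -((n - i) * N), (β i).coeff m = 0) (i j : Fin n) {m : ℤ}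
    (hm : m < -N) : (shear (fun j : Fin n => j * N) (a • companionMatrix β) i j).coeff m = 0 := by
  rw [shear_nsmul_companionMatrix_coeff a N β i j (by omega), hβ i _ (by linarith), coeff_one,
    if_neg (by omega : m + N ≠ 0), ite_self, ite_self, smul_zero]

lemma shear_nsmul_companionMatrix_coeff_neg (a : ℕ) {N : ℤ} (hN : 0 < N) (β : Fin n → R⸨X⸩) :
    (Matrix.of fun i j => (shear (fun j : Fin n => j * N) (a • companionMatrix β) i j).coeff (-N)) =
      a • companionMatrix fun i : Fin n => (β i).coeff (-((n - i) * N)) := by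
  ext i j
  rw [Matrix.of_apply, shear_nsmul_companionMatrix_coeff a N β i j (by omega), Matrix.smul_apply,
    companionMatrix_apply, neg_add_cancel, zero_sub, coeff_one, if_pos rfl]

lemma exists_isConnectionMatrix_ramified {G E : Matrix (Fin n) (Fin n) R⸨X⸩} {b : Fin n → R⸨X⸩}
    (hE : IsUnit E)
    (hb : IsConnectionMatrix (eulerDerivation R) (single (1 : ℤ) (1 : R) • G) E (companionMatrix b))
    {a N : ℕ} (ha : 0 < a) (hN : 1 ≤ N)
    (hslope : ∀ i : Fin n, -((n - i : ℤ) * N) ≤ a * (b i).order) :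
    ∃ P, IsUnit P ∧ ∃ B : Matrix (Fin n) (Fin n) (PowerSeries R),
      IsConnectionMatrix (eulerDerivation R)
        (a • Matrix.of fun i j => lsExpand a (single (1 : ℤ) (1 : R) * G i j)) P
        (single (-N : ℤ) (1 : R) •
          ((a • companionMatrix fun i : Fin n =>
            (lsExpand a (b i)).coeff (-((n - i : ℤ) * N))).map (fun x => C x) +
            single (1 : ℤ) (1 : R) • B.map (ofPowerSeries ℤ R))) := by
  let β := lsExpandHom R ha ∘ b
  have hβ_apply (i : Fin n) : β i = lsExpand a (b i) := lsExpandHom_apply ha (b i)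
  have hβ (i : Fin n) (m : ℤ) (hm : m < -((n - i) * N)) : (β i).coeff m = 0 := by
    rw [hβ_apply]
    exact lsExpand_coeff_eq_zero_of_lt ha (hm.trans_le (hslope i))
  have hG : (single (1 : ℤ) (1 : R) • G).map (lsExpandHom R ha) =
      Matrix.of fun i j => lsExpand a (single (1 : ℤ) (1 : R) * G i j) :=
    Matrix.ext fun _ _ => lsExpandHom_apply ha _
  obtain ⟨B, hB⟩ := exists_eq_single_smul_leading_add fun i j _ =>
    shear_nsmul_companionMatrix_coeff_of_lt a (Nat.cast_nonneg N) hβ i j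
  have hramified := hb.map (σ := lsExpandHom R ha) (c := (a : R⸨X⸩)) (D' := eulerDerivation R)
    fun f => by simp only [lsExpandHom_apply, eulerDerivation_lsExpand ha]
  rw [companionMatrix_map, Nat.cast_smul_eq_nsmul, Nat.cast_smul_eq_nsmul, hG] at hramified
  have hsheared := hramified.trans (isConnectionMatrix_shear (fun j : Fin n => j * N) _)
  rw [hB, shear_nsmul_companionMatrix_coeff_neg a (by omega)] at hsheared
  simp only [hβ_apply] at hsheared
  exact ⟨_, (hE.map (lsExpandHom R ha).mapMatrix).mul (isUnit_diagonal_single _), B, hsheared⟩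

end Ramification

theorem statement10_general {R : Type*} [CommRing R] [IsReduced R] {n : ℕ}
    {G : Matrix (Fin n) (Fin n) (LaurentSeries R)} {v : Fin n → LaurentSeries R}
    (hcyc : IsUnit (krylovMatrix (connOp n G) v)) (hirr : ¬ HasRegularSingularity G)
    {a : ℕ} (ha : 0 < a) (hreg : IsSMulRegular R a) (hdvd : n.factorial ∣ a) :
    ∃ P : Matrix (Fin n) (Fin n) (LaurentSeries R), IsUnit P ∧
      ∃ N : ℕ, 1 ≤ N ∧
      ∃ A : Matrix (Fin n) (Fin n) R, ¬ IsNilpotent A ∧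
      ∃ B : Matrix (Fin n) (Fin n) (PowerSeries R),
        HahnSeries.single (1 : ℤ) (1 : R) • matDeriv P +
            a • ((Matrix.of fun i j =>
              lsExpand a (HahnSeries.single (1 : ℤ) (1 : R) * G i j)) * P) =
          P * (HahnSeries.single (-(N : ℤ)) (1 : R) •
            (A.map (fun x : R => (HahnSeries.C x : LaurentSeries R)) +
              HahnSeries.single (1 : ℤ) (1 : R) • B.map (HahnSeries.ofPowerSeries ℤ R))) := by
  obtain ⟨E, hE, b, hb⟩ := exists_isConnectionMatrix_companionMatrix hcyc
  have hpole : ∃ i, (b i).order < 0 := by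
    contrapose! hirr
    exact hasRegularSingularity_of_companionMatrix hE hirr hb
  obtain ⟨N, hN, hslope, i₀, hneg, hi₀⟩ := exists_newton_slope ha hdvd hpole
  have hlead : (lsExpand a (b i₀)).coeff (-((n - i₀ : ℤ) * N)) ≠ 0 := by
    rw [← hi₀, lsExpand_coeff_mul ha]
    refine mt HahnSeries.coeff_order_eq_zero.mp fun hzero => hneg.ne ?_
    rw [hzero, HahnSeries.order_zero]
  obtain ⟨P, hP, B, hB⟩ := exists_isConnectionMatrix_ramified hE hb ha hN hslope
  refine ⟨P, hP, N, hN, _, fun hnil => hlead ?_, B, by rwa [← smul_mul_assoc]⟩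
  have hcompanion := isNilpotent_of_isNilpotent_nsmul hreg.matrix hnil
  exact congrFun (eq_zero_of_isNilpotent_companionMatrix hcompanion) i₀

/-- Theorem A.3 of the paper; the Fuchs–Turrittin–Lutz theorem over a global
affine variety. Let `R` be an integral domain, finitely generated as a `ℤ`-algebra, with
fraction field `K` of characteristic `0`, and `M = Fin n → R((t))` a free `R((t))`-module of
rank `n` with connection `∇ = d/dt + G` possessing a cyclic vector `v`. Suppose that over
`K((t))` the connection does not have a regular singularity at `t = 0`, i.e. there is no basis
in which the matrix of `∇_{t·d/dt}` has entries in `K[[t]]`. Then for every positive multiple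
`a` of `n!`, the base change along `t ↦ s^a` (whose operator `∇'_{s·d/ds}` is
`x ↦ s·(dx/ds) + a·(s^a·G(s^a))·x`) admits a basis (encoded by an invertible matrix `P`) in
which its matrix is `s^{-N}·(A + s·B)` for some `N ≥ 1`, some non-nilpotent `A ∈ Mₙ(R)` and
some `B ∈ Mₙ(R[[s]])`. -/
theorem statement10 {R : Type*} [CommRing R] [IsDomain R] [Algebra.FiniteType ℤ R]
    [CharZero (FractionRing R)]
    (n : ℕ) (G : Matrix (Fin n) (Fin n) (LaurentSeries R))
    (v : Fin n → LaurentSeries R)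
    (hcyc : IsUnit (Matrix.of fun i j : Fin n => ((connOp n G)^[(j : ℕ)] v) i))
    (hirr : ¬ ∃ P : Matrix (Fin n) (Fin n) (LaurentSeries (FractionRing R)),
      IsUnit P ∧
      ∃ B : Matrix (Fin n) (Fin n) (PowerSeries (FractionRing R)),
        (HahnSeries.single (1 : ℤ) (1 : FractionRing R)) •
            (matDeriv P + (G.map fun g => g.map (algebraMap R (FractionRing R))) * P) =
          P * (B.map (HahnSeries.ofPowerSeries ℤ (FractionRing R)))) :
    ∀ a : ℕ, 0 < a → n.factorial ∣ a →
      ∃ P : Matrix (Fin n) (Fin n) (LaurentSeries R),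
        IsUnit P ∧
        ∃ N : ℕ, 1 ≤ N ∧
        ∃ A : Matrix (Fin n) (Fin n) R, ¬ IsNilpotent A ∧
        ∃ B : Matrix (Fin n) (Fin n) (PowerSeries R),
          (HahnSeries.single (1 : ℤ) (1 : R)) • matDeriv P +
              a • ((Matrix.of fun i j =>
                lsExpand a ((HahnSeries.single (1 : ℤ) (1 : R)) * G i j)) * P) =
            P * ((HahnSeries.single (-(N : ℤ)) (1 : R)) •
              (A.map (fun x : R => ((HahnSeries.C x) : LaurentSeries R)) +
                (HahnSeries.single (1 : ℤ) (1 : R)) •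
                  B.map (HahnSeries.ofPowerSeries ℤ R))) := by
  intro a ha hdvd
  have : CharZero R := (algebraMap R (FractionRing R)).charZero
  exact statement10_general hcyc (fun h => hirr (h.map (algebraMap R (FractionRing R)))) ha
    (nsmul_right_injective ha.ne') hdvd
end
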